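/- Let δ ∈ (0,1), c ≥ 0, and let F : C(2π) → C(2π) be a bounded linear operator satisfying ‖F(g) − g‖∞ ≤ (δ/(1−δ))·c·‖g‖∞ for all g ∈ C(2π). Then for every f ∈ C(2π) and all nonnegative integers m, n, dist(f, F(R_{mn}(2π))) ≤ ((1 + δ(c−1))/(1−δ))·dist(f, R_{mn}(2π)) + (δ·c/(1−δ))·‖f‖∞. -/

import Mathlib

/-!
With `K = δ c / (1 - δ)`, the leading coefficient is `1 + K`. For every `t` in `RatTrig m n`,
`‖f - F t‖ ≤ ‖f - t‖ + ‖t - F t‖ ≤ ‖f - t‖ + K ‖t‖ ≤ (1 + K) ‖f - t‖ + K ‖f‖`,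
and taking the infimum over `t` gives the bound.
-/

open scoped Real

noncomputable section

abbrev Ipi : Set ℝ := Set.Icc (-Real.pi) Real.pi

lemma negPi_mem_Ipi : -Real.pi ∈ Ipi := ⟨le_rfl, neg_le_self Real.pi_pos.le⟩
lemma pi_mem_Ipi : Real.pi ∈ Ipi := ⟨neg_le_self Real.pi_pos.le, le_rfl⟩

/-- The space `C(2π)` of continuous functions on `[-π, π]` with equal values at the
endpoints, as a submodule of `C([-π,π], ℝ)`. -/
def C2pi : Submodule ℝ C(Ipi, ℝ) where
  carrier := {f | f ⟨-Real.pi, negPi_mem_Ipi⟩ = f ⟨Real.pi, pi_mem_Ipi⟩}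
  add_mem' := by
    intro f g hf hg
    simp only [Set.mem_setOf_eq, ContinuousMap.add_apply] at *
    rw [hf, hg]
  zero_mem' := rfl
  smul_mem' := by
    intro c f hf
    simp only [Set.mem_setOf_eq, ContinuousMap.smul_apply] at *
    rw [hf]

def trigCos (k : ℕ) : C(Ipi, ℝ) := ⟨fun x => Real.cos (k * (x : ℝ)), by fun_prop⟩
def trigSin (k : ℕ) : C(Ipi, ℝ) := ⟨fun x => Real.sin (k * (x : ℝ)), by fun_prop⟩

/-- Trigonometric polynomials of degree at most `m`. -/
def TrigPoly (m : ℕ) : Submodule ℝ C(Ipi, ℝ) :=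
  Submodule.span ℝ {f | ∃ k ≤ m, f = trigCos k ∨ f = trigSin k}

/-- Rational trigonometric functions of type `(m, n)`. -/
def RatTrig (m n : ℕ) : Set C2pi :=
  {t | ∃ p ∈ TrigPoly m, ∃ q ∈ TrigPoly n, (∀ x, 0 < q x) ∧
    ∀ x, (t : C(Ipi, ℝ)) x = p x / q x}

/-- The set `R(2π)` of all rational trigonometric functions. -/
def RatTrigAll : Set C2pi := ⋃ (m : ℕ), ⋃ (n : ℕ), RatTrig m n


theorem stmt8 (δ c : ℝ) (hδ : δ ∈ Set.Ioo (0 : ℝ) 1) (hc : 0 ≤ c)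
    (F : C2pi →L[ℝ] C2pi)
    (hF : ∀ g : C2pi, ‖F g - g‖ ≤ δ / (1 - δ) * c * ‖g‖)
    (f : C2pi) (m n : ℕ) :
    Metric.infDist f ((fun t => F t) '' RatTrig m n) ≤
      (1 + δ * (c - 1)) / (1 - δ) * Metric.infDist f (RatTrig m n) +
        δ * c / (1 - δ) * ‖f‖ := by
  have h1 : 0 < 1 - δ := sub_pos.2 hδ.2
  have hK : 0 ≤ δ * c / (1 - δ) := div_nonneg (mul_nonneg hδ.1.le hc) h1.le
  have e1 : δ / (1 - δ) * c = δ * c / (1 - δ) := by ring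
  have e2 : (1 + δ * (c - 1)) / (1 - δ) = 1 + δ * c / (1 - δ) := by
    field_simp
    ring
  rw [e2]
  simp only [e1] at hF
  generalize δ * c / (1 - δ) = K at hK hF
  -- Nonemptiness matters: `infDist` to the empty set would be the junk value `0`.
  have hne : (RatTrig m n).Nonempty := by
    refine ⟨0, 0, Submodule.zero_mem _, trigCos 0,
      Submodule.subset_span ⟨0, Nat.zero_le _, Or.inl rfl⟩, fun x => ?_, fun x => ?_⟩
    · simp [trigCos]
    · simp
  have key : (Metric.infDist f ((fun t => F t) '' RatTrig m n) - K * ‖f‖) / (1 + K) ≤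
      Metric.infDist f (RatTrig m n) := by
    refine (Metric.le_infDist hne).2 fun t ht => ?_
    rw [div_le_iff₀ (by linarith)]
    have a1 : Metric.infDist f ((fun t => F t) '' RatTrig m n) ≤ dist f (F t) :=
      Metric.infDist_le_dist_of_mem ⟨t, ht, rfl⟩
    have a2 : dist f (F t) ≤ dist f t + dist t (F t) := dist_triangle _ _ _
    have a3 : dist t (F t) ≤ K * ‖t‖ := by
      rw [dist_comm, dist_eq_norm]
      exact hF t
    have a4 : ‖t‖ ≤ ‖f‖ + dist f t := by
      rw [dist_eq_norm]
      exact norm_le_norm_add_norm_sub f t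
    have a5 := mul_le_mul_of_nonneg_left a4 hK
    linarith
  rw [div_le_iff₀ (by linarith)] at key
  linarith
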